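/- Fix α ∈ ℝ and let f(s, L) = 2πα + γ_E + log(s/2) − K₀(sL) and g(s, L) = 2πα + γ_E + log(s/2) + K₀(sL) for s, L > 0, where K₀ is the modified Bessel function of the second kind and γ_E the Euler constant. Then: (a) ∂f/∂s = 1/s + L K₁(sL) > 0 and ∂f/∂L = s K₁(sL) > 0; (b) ∂g/∂s = 1/s − L K₁(sL) > 0 and ∂g/∂L = −s K₁(sL) < 0; (c) for each L > 0 the equation f(s, L) = 0 has a unique positive solution s₁(L), with s₁(L) → ∞ as L → 0⁺ and s₁(L) → 2e^{−2πα−γ_E} as L → ∞; (d) g(s, L) = 0 has no positive solution for L ≤ e^{2πα} and a unique positive solution s₂(L) for L > e^{2πα}, with s₂(L) → 0 as L → e^{2πα}⁺ and s₂(L) → 2e^{−2πα−γ_E} as L → ∞. -/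

import Mathlib

open Set Filter Topology Real

noncomputable section

/-- The modified Bessel function of the second kind `K₀`, via the integral
representation `K₀(z) = ∫₁^∞ e^{−zt}(t²−1)^{−1/2} dt`. -/
def K0 (z : ℝ) : ℝ := ∫ t in Set.Ioi (1 : ℝ), Real.exp (-z * t) * (t ^ 2 - 1) ^ (-(1 : ℝ) / 2)

/-- The modified Bessel function of the second kind `K₁`, via the integral
representation `K₁(z) = z ∫₁^∞ e^{−zt}(t²−1)^{1/2} dt`. -/
def K1 (z : ℝ) : ℝ := z * ∫ t in Set.Ioi (1 : ℝ), Real.exp (-z * t) * (t ^ 2 - 1) ^ ((1 : ℝ) / 2)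

/-- `f(s,L) = 2πα + γ_E + log(s/2) − K₀(sL)`. -/
def fα (α s L : ℝ) : ℝ :=
  2 * π * α + eulerMascheroniConstant + Real.log (s / 2) - K0 (s * L)

/-- `g(s,L) = 2πα + γ_E + log(s/2) + K₀(sL)`. -/
def gα (α s L : ℝ) : ℝ :=
  2 * π * α + eulerMascheroniConstant + Real.log (s / 2) + K0 (s * L)

/-!
Substituting `t = √(1 + u²)` turns `K₀(z)` into `∫_{u>0} e^{-z√(1+u²)} / √(1+u²)` and, after an
integration by parts, `K₁(z)` into `∫_{u>0} e^{-z√(1+u²)}`. In this form `K₀' = -K₁` is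
differentiation under the integral sign, and comparison with `∫_{u>0} e^{-zu} = 1/z` gives
`0 ≤ K₀ ≤ K₁ < 1/z`. For small `z`, rescale to `v = zu` and integrate by parts against the primitive
`log (v + √(z²+v²))` of `1 / √(z²+v²)`: by dominated convergence `K₀(z) + e^{-z} log z` tends to
`∫_{v>0} e^{-v} log (2v) = log 2 - γ`, the value `-γ` being `Γ'(1)`.

In the scaled variable `z = sL` both eigenvalue equations read
`log (z/2) + γ + σ K₀(z) = log L - 2πα`, with `σ = -1` for `f` and `σ = 1` for `g`. The left side is
strictly increasing because `σ K₁(z) < 1/z`; it maps `(0, ∞)` onto `ℝ` if `σ < 1` and onto `(0, ∞)`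
if `σ = 1`. This gives existence and uniqueness of `s`. As the right side tends to an end of that
range, `z` tends to `0` or `∞`, and `s = 2 exp (-2πα - γ - σ K₀(z))`, or `s = z/L` near the
threshold `L = e^{2πα}`, gives the limits.
-/

open MeasureTheory

theorem setIntegral_pos_of_forall_pos {X : Type*} [MeasurableSpace X] {μ : Measure X} {s : Set X}
    {f : X → ℝ} (hs : MeasurableSet s) (hμs : 0 < μ s) (hf : IntegrableOn f s μ)
    (hpos : ∀ x ∈ s, 0 < f x) : 0 < ∫ x in s, f x ∂μ := by
  have hsupp : Function.support f ∩ s = s := inter_eq_right.2 fun x hx => (hpos x hx).ne'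
  rwa [setIntegral_pos_iff_support_of_nonneg_ae
    ((ae_restrict_mem hs).mono fun x hx => (hpos x hx).le) hf, hsupp]

theorem integrableOn_exp_neg_mul_Ioi {c : ℝ} (hc : 0 < c) :
    IntegrableOn (fun u : ℝ => exp (-c * u)) (Ioi 0) :=
  integrableOn_exp_mul_Ioi (neg_neg_of_pos hc) 0

theorem integrableOn_exp_neg_mul_mul_id_Ioi {c : ℝ} (hc : 0 < c) :
    IntegrableOn (fun u : ℝ => exp (-c * u) * u) (Ioi 0) := by
  simpa [mul_comm] using
    integrableOn_rpow_mul_exp_neg_mul_rpow (p := 1) (s := 1) (by norm_num) one_pos hc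

theorem tendsto_exp_neg_mul_mul_id_atTop {c : ℝ} (hc : 0 < c) :
    Tendsto (fun u : ℝ => exp (-c * u) * u) atTop (𝓝 0) := by
  simpa [mul_comm] using tendsto_rpow_mul_exp_neg_mul_atTop_nhds_zero 1 c hc

theorem hasDerivAt_sqrt_add_sq {c : ℝ} (hc : 0 < c) (u : ℝ) :
    HasDerivAt (fun u : ℝ => √(c + u ^ 2)) (u / √(c + u ^ 2)) u := by
  have h : HasDerivAt (fun u : ℝ => c + u ^ 2) (2 * u) u := by
    simpa using (hasDerivAt_pow 2 u).const_add c
  exact (h.sqrt (by positivity)).congr_deriv (mul_div_mul_left u _ two_ne_zero)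

theorem le_sqrt_add_sq {c : ℝ} (hc : 0 ≤ c) (u : ℝ) : u ≤ √(c + u ^ 2) :=
  Real.le_sqrt_of_sq_le (by linarith)

section Integrals

variable {z : ℝ}

theorem exp_neg_mul_sqrt_le (hz : 0 ≤ z) (u : ℝ) :
    exp (-z * √(1 + u ^ 2)) ≤ exp (-z * u) :=
  exp_le_exp.2 (mul_le_mul_of_nonpos_left (le_sqrt_add_sq zero_le_one u) (neg_nonpos.2 hz))

theorem integrableOn_exp_neg_mul_sqrt (hz : 0 < z) :
    IntegrableOn (fun u : ℝ => exp (-z * √(1 + u ^ 2))) (Ioi 0) := by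
  refine (integrableOn_exp_neg_mul_Ioi hz).mono' (by fun_prop) (ae_of_all _ fun u => ?_)
  simpa only [norm_eq_abs, abs_exp] using exp_neg_mul_sqrt_le hz.le u

theorem exp_neg_mul_sqrt_div_sqrt_le (z u : ℝ) :
    exp (-z * √(1 + u ^ 2)) / √(1 + u ^ 2) ≤ exp (-z * √(1 + u ^ 2)) :=
  div_le_self (exp_pos _).le (Real.one_le_sqrt.2 (by nlinarith))

theorem integrableOn_exp_neg_mul_sqrt_div_sqrt (hz : 0 < z) :
    IntegrableOn (fun u : ℝ => exp (-z * √(1 + u ^ 2)) / √(1 + u ^ 2)) (Ioi 0) := by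
  refine (integrableOn_exp_neg_mul_sqrt hz).mono'
    (Measurable.aestronglyMeasurable (by fun_prop)) (ae_of_all _ fun u => ?_)
  rw [norm_of_nonneg (by positivity)]
  exact exp_neg_mul_sqrt_div_sqrt_le z u

theorem image_sqrt_one_add_sq_Ioi : (fun u : ℝ => √(1 + u ^ 2)) '' Ioi 0 = Ioi 1 := by
  ext t
  refine ⟨?_, fun ht => ⟨√(t ^ 2 - 1), ?_, ?_⟩⟩
  · rintro ⟨u, hu, rfl⟩
    exact Real.lt_sqrt_of_sq_lt (by nlinarith [mem_Ioi.1 hu])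
  · exact Real.sqrt_pos.2 (by nlinarith [mem_Ioi.1 ht])
  · have ht : 1 < t := ht
    dsimp only
    rw [sq_sqrt (by nlinarith), add_sub_cancel, sqrt_sq (by linarith)]

theorem integral_Ioi_one_eq_integral_sqrt (g : ℝ → ℝ) :
    ∫ t in Ioi 1, g t = ∫ u in Ioi 0, u / √(1 + u ^ 2) * g √(1 + u ^ 2) := by
  have hmono : MonotoneOn (fun u : ℝ => √(1 + u ^ 2)) (Ioi 0) := fun u hu v _ huv =>
    Real.sqrt_le_sqrt (by have := mem_Ioi.1 hu; gcongr)
  rw [← image_sqrt_one_add_sq_Ioi]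
  exact integral_image_eq_integral_deriv_smul_of_monotoneOn measurableSet_Ioi
    (fun u _ => (hasDerivAt_sqrt_add_sq one_pos u).hasDerivWithinAt) hmono g

theorem K0_eq_integral (z : ℝ) :
    K0 z = ∫ u in Ioi 0, exp (-z * √(1 + u ^ 2)) / √(1 + u ^ 2) := by
  rw [K0, integral_Ioi_one_eq_integral_sqrt]
  refine setIntegral_congr_fun measurableSet_Ioi fun u hu => ?_
  have hu : 0 < u := hu
  have hpow : (√(1 + u ^ 2) ^ 2 - 1) ^ (-(1 : ℝ) / 2) = u⁻¹ := by
    rw [sq_sqrt (by positivity), add_sub_cancel_left, neg_div, rpow_neg (sq_nonneg u),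
      ← sqrt_eq_rpow, sqrt_sq hu.le]
  simp only [hpow]
  field_simp

theorem hasDerivAt_exp_neg_mul_sqrt (z u : ℝ) :
    HasDerivAt (fun u : ℝ => exp (-z * √(1 + u ^ 2)))
      (exp (-z * √(1 + u ^ 2)) * (-z * (u / √(1 + u ^ 2)))) u :=
  ((hasDerivAt_sqrt_add_sq one_pos u).const_mul (-z)).exp

theorem integrableOn_mul_deriv_exp_neg_mul_sqrt (hz : 0 < z) :
    IntegrableOn (fun u : ℝ => u * (exp (-z * √(1 + u ^ 2)) * (-z * (u / √(1 + u ^ 2)))))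
      (Ioi 0) := by
  refine ((integrableOn_exp_neg_mul_mul_id_Ioi hz).const_mul z).mono'
    (Measurable.aestronglyMeasurable (by fun_prop))
    ((ae_restrict_mem measurableSet_Ioi).mono fun u hu => ?_)
  have hu : 0 < u := hu
  have hratio : u / √(1 + u ^ 2) ≤ 1 :=
    div_le_one_of_le₀ (le_sqrt_add_sq zero_le_one u) (sqrt_nonneg _)
  calc ‖u * (exp (-z * √(1 + u ^ 2)) * (-z * (u / √(1 + u ^ 2))))‖
      = z * (exp (-z * √(1 + u ^ 2)) * u) * (u / √(1 + u ^ 2)) := by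
        rw [neg_mul z (_ / _), mul_neg, mul_neg, norm_neg, norm_of_nonneg (by positivity)]
        ring
    _ ≤ z * (exp (-z * u) * u) * 1 := by
        have := exp_neg_mul_sqrt_le hz.le u
        gcongr
    _ = z * (exp (-z * u) * u) := mul_one _

theorem K1_eq_integral (hz : 0 < z) : K1 z = ∫ u in Ioi 0, exp (-z * √(1 + u ^ 2)) := by
  have hsubst : K1 z =
      -∫ u in Ioi 0, u * (exp (-z * √(1 + u ^ 2)) * (-z * (u / √(1 + u ^ 2)))) := by
    rw [K1, integral_Ioi_one_eq_integral_sqrt, ← integral_const_mul, ← integral_neg]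
    refine setIntegral_congr_fun measurableSet_Ioi fun u hu => ?_
    have hpow : (√(1 + u ^ 2) ^ 2 - 1) ^ ((1 : ℝ) / 2) = u := by
      rw [sq_sqrt (by positivity), add_sub_cancel_left, ← sqrt_eq_rpow, sqrt_sq (le_of_lt hu)]
    simp only [hpow]
    ring
  have hzero : Tendsto ((fun u : ℝ => u) * fun u => exp (-z * √(1 + u ^ 2))) (𝓝[>] 0) (𝓝 0) := by
    have hcont : Continuous ((fun u : ℝ => u) * fun u => exp (-z * √(1 + u ^ 2))) := by fun_prop
    simpa using (hcont.tendsto 0).mono_left nhdsWithin_le_nhds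
  have hinfty : Tendsto ((fun u : ℝ => u) * fun u => exp (-z * √(1 + u ^ 2))) atTop (𝓝 0) := by
    refine squeeze_zero' ((eventually_ge_atTop 0).mono fun u hu => by
      dsimp only [Pi.mul_apply]; positivity) ?_ (tendsto_exp_neg_mul_mul_id_atTop hz)
    filter_upwards [eventually_ge_atTop 0] with u hu
    rw [Pi.mul_apply, mul_comm]
    exact mul_le_mul_of_nonneg_right (exp_neg_mul_sqrt_le hz.le u) hu
  rw [hsubst, integral_Ioi_mul_deriv_eq_deriv_mul (u := fun u => u) (u' := fun _ => 1)
    (fun u _ => hasDerivAt_id u) (fun u _ => hasDerivAt_exp_neg_mul_sqrt z u)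
    (integrableOn_mul_deriv_exp_neg_mul_sqrt hz)
    (by simpa [Pi.mul_def] using integrableOn_exp_neg_mul_sqrt hz) hzero hinfty]
  simp only [one_mul, sub_zero, zero_sub, neg_neg]

theorem K0_nonneg (z : ℝ) : 0 ≤ K0 z := by
  rw [K0_eq_integral]
  positivity

theorem K1_pos (hz : 0 < z) : 0 < K1 z := by
  rw [K1_eq_integral hz]
  exact setIntegral_pos_of_forall_pos measurableSet_Ioi (by simp)
    (integrableOn_exp_neg_mul_sqrt hz) fun u _ => exp_pos _

theorem K1_lt_one_div (hz : 0 < z) : K1 z < 1 / z := by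
  have hexp : ∫ u in Ioi 0, exp (-z * u) = 1 / z := by
    rw [integral_exp_mul_Ioi (neg_neg_of_pos hz)]
    simp
  rw [← sub_pos, K1_eq_integral hz, ← hexp,
    ← integral_sub (integrableOn_exp_neg_mul_Ioi hz) (integrableOn_exp_neg_mul_sqrt hz)]
  refine setIntegral_pos_of_forall_pos measurableSet_Ioi (by simp)
    ((integrableOn_exp_neg_mul_Ioi hz).sub (integrableOn_exp_neg_mul_sqrt hz)) fun u _ => ?_
  have hlt : u < √(1 + u ^ 2) := Real.lt_sqrt_of_sq_lt (by linarith)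
  exact sub_pos.2 (exp_lt_exp.2 (mul_lt_mul_of_neg_left hlt (neg_neg_of_pos hz)))

theorem K0_le_K1 (hz : 0 < z) : K0 z ≤ K1 z := by
  rw [K0_eq_integral, K1_eq_integral hz]
  exact integral_mono (integrableOn_exp_neg_mul_sqrt_div_sqrt hz)
    (integrableOn_exp_neg_mul_sqrt hz) fun u => exp_neg_mul_sqrt_div_sqrt_le z u

theorem tendsto_K0_atTop : Tendsto K0 atTop (𝓝 0) := by
  refine squeeze_zero' (Eventually.of_forall K0_nonneg) ?_ (tendsto_inv_atTop_zero (𝕜 := ℝ))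
  filter_upwards [eventually_gt_atTop 0] with z hz
  exact (K0_le_K1 hz).trans (by simpa using (K1_lt_one_div hz).le)

theorem hasDerivAt_K0 (hz : 0 < z) : HasDerivAt K0 (-K1 z) z := by
  have hderiv := (hasDerivAt_integral_of_dominated_loc_of_deriv_le
    (μ := volume.restrict (Ioi (0 : ℝ))) (s := Ioi (z / 2))
    (F := fun w u => exp (-w * √(1 + u ^ 2)) / √(1 + u ^ 2))
    (F' := fun w u => -exp (-w * √(1 + u ^ 2)))
    (bound := fun u => exp (-(z / 2) * √(1 + u ^ 2)))
    (Ioi_mem_nhds (half_lt_self hz))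
    (Eventually.of_forall fun w => Measurable.aestronglyMeasurable (by fun_prop))
    (integrableOn_exp_neg_mul_sqrt_div_sqrt hz) (by fun_prop)
    (ae_of_all _ fun u w hw => ?_) (integrableOn_exp_neg_mul_sqrt (half_pos hz))
    (ae_of_all _ fun u w _ => ?_)).2
  · rw [integral_neg, ← K1_eq_integral hz] at hderiv
    exact hderiv.congr_of_eventuallyEq (Eventually.of_forall K0_eq_integral)
  · rw [norm_neg, norm_eq_abs, abs_exp]
    have hw : z / 2 < w := hw
    gcongr
  · have hexp : HasDerivAt (fun w : ℝ => exp (-w * √(1 + u ^ 2)))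
        (exp (-w * √(1 + u ^ 2)) * (-1 * √(1 + u ^ 2))) w :=
      ((hasDerivAt_neg w).mul_const _).exp
    refine (hexp.div_const √(1 + u ^ 2)).congr_deriv ?_
    field_simp

end Integrals

section LogAsymptotics

variable {z : ℝ}

theorem integral_exp_neg_mul_log :
    ∫ v in Ioi (0 : ℝ), exp (-v) * log v = -eulerMascheroniConstant := by
  have hGamma : Complex.Gamma =ᶠ[𝓝 1] Complex.GammaIntegral := by
    filter_upwards [(isOpen_lt continuous_const Complex.continuous_re).mem_nhds
      (show (0 : ℝ) < (1 : ℂ).re by simp)] with s hs using Complex.Gamma_eq_integral hs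
  have hderiv := Complex.hasDerivAt_Gamma_one.unique
    ((Complex.hasDerivAt_GammaIntegral (by simp)).congr_of_eventuallyEq hGamma)
  have hcast : ∫ t : ℝ in Ioi 0, (t : ℂ) ^ ((1 : ℂ) - 1) * (log t * exp (-t))
      = ((∫ v in Ioi (0 : ℝ), exp (-v) * log v : ℝ) : ℂ) := by
    rw [← integral_complex_ofReal]
    simp [mul_comm]
  rw [hcast] at hderiv
  exact_mod_cast hderiv.symm

theorem integrableOn_exp_neg_mul_log :
    IntegrableOn (fun v : ℝ => exp (-v) * log v) (Ioi 0) := by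
  -- a non-integrable function would have integral `0`, whereas the integral is `-γ`
  refine Integrable.of_integral_ne_zero ?_
  rw [integral_exp_neg_mul_log]
  linarith [one_half_lt_eulerMascheroniConstant]

theorem hasDerivAt_log_add_sqrt (hz : 0 < z) {v : ℝ} (hv : 0 ≤ v) :
    HasDerivAt (fun v : ℝ => log (v + √(z ^ 2 + v ^ 2))) (1 / √(z ^ 2 + v ^ 2)) v := by
  have hsqrt := hasDerivAt_sqrt_add_sq (pow_pos hz 2) v
  have hpos : v + √(z ^ 2 + v ^ 2) ≠ 0 := by positivity
  refine (((hasDerivAt_id v).add hsqrt).log hpos).congr_deriv ?_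
  dsimp only [Pi.add_apply, id]
  field_simp
  ring

theorem abs_log_add_sqrt_le (hz : 0 ≤ z) {v : ℝ} (hv : 0 < v) :
    |log (v + √(z ^ 2 + v ^ 2))| ≤ |log v| + (2 * v + z) := by
  have hle : √(z ^ 2 + v ^ 2) ≤ z + v := Real.sqrt_le_iff.2 ⟨by positivity, by nlinarith⟩
  have hlower : log v ≤ log (v + √(z ^ 2 + v ^ 2)) :=
    log_le_log hv (le_add_of_nonneg_right (sqrt_nonneg _))
  have hupper := log_le_sub_one_of_pos (show 0 < v + √(z ^ 2 + v ^ 2) by positivity)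
  rw [abs_le]
  constructor <;> linarith [neg_abs_le (log v), abs_nonneg (log v)]

theorem integrableOn_exp_neg_mul_abs_log_add (c : ℝ) :
    IntegrableOn (fun v : ℝ => exp (-v) * (|log v| + (2 * v + c))) (Ioi 0) := by
  have habs : IntegrableOn (fun v : ℝ => exp (-v) * |log v|) (Ioi 0) :=
    integrableOn_exp_neg_mul_log.norm.congr (ae_of_all _ fun v => by simp)
  have hid : IntegrableOn (fun v : ℝ => exp (-v) * v) (Ioi 0) := by
    simpa using integrableOn_exp_neg_mul_mul_id_Ioi one_pos
  refine (habs.add ((hid.const_mul 2).add ((integrableOn_exp_neg_Ioi 0).const_mul c))).congr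
    (ae_of_all _ fun v => ?_)
  simp only [Pi.add_apply]
  ring

theorem norm_log_add_sqrt_mul_exp_le {c v : ℝ} (hz : 0 ≤ z) (hzc : z ≤ c) (hv : 0 < v) :
    ‖log (v + √(z ^ 2 + v ^ 2)) * (exp (-√(z ^ 2 + v ^ 2)) * (v / √(z ^ 2 + v ^ 2)))‖ ≤
      exp (-v) * (|log v| + (2 * v + c)) := by
  have hsqrt := le_sqrt_add_sq (sq_nonneg z) v
  have hweight : exp (-√(z ^ 2 + v ^ 2)) * (v / √(z ^ 2 + v ^ 2)) ≤ exp (-v) * 1 :=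
    mul_le_mul (exp_le_exp.2 (neg_le_neg hsqrt)) (div_le_one_of_le₀ hsqrt (sqrt_nonneg _))
      (by positivity) (exp_pos _).le
  have hlog := abs_log_add_sqrt_le hz hv
  rw [norm_mul, norm_eq_abs, norm_of_nonneg (by positivity), mul_comm, ← mul_one (exp (-v))]
  gcongr
  linarith

theorem K0_eq_integral_exp_neg_sqrt (hz : 0 < z) :
    K0 z = ∫ v in Ioi 0, exp (-√(z ^ 2 + v ^ 2)) / √(z ^ 2 + v ^ 2) := by
  have hscale (u : ℝ) : √(z ^ 2 + (z * u) ^ 2) = z * √(1 + u ^ 2) := by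
    rw [← sqrt_sq hz.le, ← sqrt_mul (sq_nonneg _), sqrt_sq hz.le]
    ring_nf
  have hsubst := integral_comp_mul_left_Ioi'
    (fun v => exp (-√(z ^ 2 + v ^ 2)) / √(z ^ 2 + v ^ 2)) 0 hz
  rw [mul_zero] at hsubst
  rw [K0_eq_integral, ← hsubst, smul_eq_mul, ← integral_const_mul]
  congr 1 with u
  rw [hscale, neg_mul]
  field_simp

theorem integrableOn_exp_neg_sqrt_div_sqrt (hz : 0 < z) :
    IntegrableOn (fun v : ℝ => exp (-√(z ^ 2 + v ^ 2)) / √(z ^ 2 + v ^ 2)) (Ioi 0) := by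
  refine ((integrableOn_exp_neg_Ioi 0).div_const z).mono'
    (Measurable.aestronglyMeasurable (by fun_prop)) (ae_of_all _ fun v => ?_)
  rw [norm_of_nonneg (by positivity)]
  have hle : z ≤ √(z ^ 2 + v ^ 2) := Real.le_sqrt_of_sq_le (by nlinarith)
  have hexp := le_sqrt_add_sq (sq_nonneg z) v
  gcongr

theorem tendsto_log_add_sqrt_mul_exp_atTop (hz : 0 < z) :
    Tendsto ((fun v : ℝ => log (v + √(z ^ 2 + v ^ 2))) * fun v => exp (-√(z ^ 2 + v ^ 2)))
      atTop (𝓝 0) := by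
  have hbound : Tendsto (fun v : ℝ => exp (-1 * v) * v * 3 + exp (-v) * z) atTop (𝓝 0) := by
    simpa using ((tendsto_exp_neg_mul_mul_id_atTop one_pos).mul_const 3).add
      (tendsto_exp_neg_atTop_nhds_zero.mul_const z)
  refine squeeze_zero_norm' ?_ hbound
  filter_upwards [eventually_ge_atTop 1] with v hv
  have hlog := abs_log_add_sqrt_le hz.le (one_pos.trans_le hv)
  rw [abs_of_nonneg (log_nonneg hv)] at hlog
  have hlogv := log_le_self (zero_le_one.trans hv)
  have hexp : exp (-√(z ^ 2 + v ^ 2)) ≤ exp (-v) :=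
    exp_le_exp.2 (neg_le_neg (le_sqrt_add_sq (sq_nonneg z) v))
  calc ‖log (v + √(z ^ 2 + v ^ 2)) * exp (-√(z ^ 2 + v ^ 2))‖
      = |log (v + √(z ^ 2 + v ^ 2))| * exp (-√(z ^ 2 + v ^ 2)) := by
        rw [norm_mul, norm_eq_abs, norm_eq_abs, abs_exp]
    _ ≤ (3 * v + z) * exp (-v) := mul_le_mul (by linarith) hexp (exp_pos _).le (by positivity)
    _ = exp (-1 * v) * v * 3 + exp (-v) * z := by rw [neg_one_mul]; ring

theorem hasDerivAt_exp_neg_sqrt (hz : 0 < z) (v : ℝ) :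
    HasDerivAt (fun v : ℝ => exp (-√(z ^ 2 + v ^ 2)))
      (-(exp (-√(z ^ 2 + v ^ 2)) * (v / √(z ^ 2 + v ^ 2)))) v :=
  (hasDerivAt_sqrt_add_sq (pow_pos hz 2) v).neg.exp.congr_deriv (mul_neg _ _)

theorem integrableOn_log_add_sqrt_mul_exp (hz : 0 < z) :
    IntegrableOn (fun v : ℝ => log (v + √(z ^ 2 + v ^ 2)) *
      (exp (-√(z ^ 2 + v ^ 2)) * (v / √(z ^ 2 + v ^ 2)))) (Ioi 0) :=
  (integrableOn_exp_neg_mul_abs_log_add z).mono'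
    (Measurable.aestronglyMeasurable (by fun_prop))
    ((ae_restrict_mem measurableSet_Ioi).mono fun _ hv =>
      norm_log_add_sqrt_mul_exp_le hz.le le_rfl hv)

theorem K0_add_log_mul_exp_neg (hz : 0 < z) :
    K0 z + log z * exp (-z) = ∫ v in Ioi 0, log (v + √(z ^ 2 + v ^ 2)) *
      (exp (-√(z ^ 2 + v ^ 2)) * (v / √(z ^ 2 + v ^ 2))) := by
  have hzero : Tendsto
      ((fun v : ℝ => log (v + √(z ^ 2 + v ^ 2))) * fun v => exp (-√(z ^ 2 + v ^ 2)))
      (𝓝[>] 0) (𝓝 (log z * exp (-z))) := by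
    have hcont := ((hasDerivAt_log_add_sqrt hz le_rfl).mul
      (hasDerivAt_exp_neg_sqrt hz 0)).continuousAt
    simpa [Pi.mul_def, sqrt_sq hz.le] using hcont.tendsto.mono_left nhdsWithin_le_nhds
  have hparts := integral_Ioi_mul_deriv_eq_deriv_mul
    (fun v hv => hasDerivAt_log_add_sqrt hz (le_of_lt hv))
    (fun v _ => hasDerivAt_exp_neg_sqrt hz v)
    (by simpa only [Pi.mul_def, Pi.neg_def, mul_neg] using
      (integrableOn_log_add_sqrt_mul_exp hz).neg)
    (by simpa only [Pi.mul_def, one_div_mul_eq_div] using integrableOn_exp_neg_sqrt_div_sqrt hz)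
    hzero (tendsto_log_add_sqrt_mul_exp_atTop hz)
  simp only [mul_neg, integral_neg, one_div_mul_eq_div] at hparts
  rw [← K0_eq_integral_exp_neg_sqrt hz] at hparts
  linarith

theorem integral_exp_neg_mul_log_two_mul :
    ∫ v in Ioi (0 : ℝ), exp (-v) * log (2 * v) = log 2 - eulerMascheroniConstant := by
  have hlog : ∀ v ∈ Ioi (0 : ℝ), exp (-v) * log (2 * v) = exp (-v) * log 2 + exp (-v) * log v :=
    fun v hv => by rw [log_mul two_ne_zero (ne_of_gt hv), mul_add]
  rw [setIntegral_congr_fun measurableSet_Ioi hlog,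
    integral_add ((integrableOn_exp_neg_Ioi 0).mul_const _) integrableOn_exp_neg_mul_log,
    integral_mul_const, integral_exp_neg_Ioi_zero, integral_exp_neg_mul_log, one_mul,
    ← sub_eq_add_neg]

theorem tendsto_K0_add_log_mul_exp_neg :
    Tendsto (fun z => K0 z + log z * exp (-z)) (𝓝[>] 0)
      (𝓝 (log 2 - eulerMascheroniConstant)) := by
  rw [← integral_exp_neg_mul_log_two_mul]
  refine (tendsto_integral_filter_of_dominated_convergence
    (fun v : ℝ => exp (-v) * (|log v| + (2 * v + 1)))
    (Eventually.of_forall fun z => Measurable.aestronglyMeasurable (by fun_prop)) ?_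
    (integrableOn_exp_neg_mul_abs_log_add 1) ?_).congr'
    (eventually_nhdsWithin_of_forall fun z hz => (K0_add_log_mul_exp_neg hz).symm)
  · filter_upwards [Ioo_mem_nhdsGT one_pos] with z hz
    exact (ae_restrict_mem measurableSet_Ioi).mono fun v hv =>
      norm_log_add_sqrt_mul_exp_le hz.1.le hz.2.le hv
  · refine (ae_restrict_mem measurableSet_Ioi).mono fun v hv => ?_
    have hv : 0 < v := hv
    have hsqrt : √(0 ^ 2 + v ^ 2) = v := by rw [zero_pow two_ne_zero, zero_add, sqrt_sq hv.le]
    have hcont : ContinuousAt (fun z : ℝ => log (v + √(z ^ 2 + v ^ 2)) *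
        (exp (-√(z ^ 2 + v ^ 2)) * (v / √(z ^ 2 + v ^ 2)))) 0 := by
      have hne : √(0 ^ 2 + v ^ 2) ≠ 0 := by positivity
      have hne' : v + √(0 ^ 2 + v ^ 2) ≠ 0 := by positivity
      fun_prop (disch := assumption)
    have hlim := hcont.tendsto.mono_left (nhdsWithin_le_nhds (s := Ioi 0))
    rwa [hsqrt, div_self hv.ne', mul_one, ← two_mul, mul_comm] at hlim

theorem tendsto_one_sub_exp_neg_mul_log :
    Tendsto (fun z : ℝ => (1 - exp (-z)) * log z) (𝓝[>] 0) (𝓝 0) := by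
  have hmul : Tendsto (fun z : ℝ => log z * z) (𝓝[>] 0) (𝓝 0) := by
    simpa using tendsto_log_mul_rpow_nhdsGT_zero one_pos
  refine squeeze_zero_norm' (eventually_nhdsWithin_of_forall fun z hz => ?_)
    (by simpa using hmul.norm)
  have hz : 0 < z := hz
  have hnonneg : 0 ≤ 1 - exp (-z) := sub_nonneg.2 (exp_le_one_iff.2 (neg_nonpos.2 hz.le))
  rw [mul_comm, norm_mul, norm_of_nonneg hnonneg, norm_eq_abs, abs_of_pos hz]
  gcongr
  linarith [one_sub_le_exp_neg z]

theorem tendsto_K0_add_log_half_nhdsGT_zero :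
    Tendsto (fun z => log (z / 2) + eulerMascheroniConstant + K0 z) (𝓝[>] 0) (𝓝 0) := by
  have hlim := (tendsto_K0_add_log_mul_exp_neg.add tendsto_one_sub_exp_neg_mul_log).add_const
    (eulerMascheroniConstant - log 2)
  rw [add_zero, sub_add_sub_cancel, sub_self] at hlim
  refine hlim.congr' (eventually_nhdsWithin_of_forall fun z hz => ?_)
  dsimp only
  rw [log_div (ne_of_gt hz) two_ne_zero]
  ring

end LogAsymptotics

theorem tendsto_log_half_nhdsGT_zero : Tendsto (fun z : ℝ => log (z / 2)) (𝓝[>] 0) atBot := by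
  refine (tendsto_log_nhdsGT_zero.atBot_add (tendsto_const_nhds (x := -log 2))).congr'
    (eventually_nhdsWithin_of_forall fun z hz => ?_)
  dsimp only
  rw [log_div (ne_of_gt hz) two_ne_zero, sub_eq_add_neg]

theorem tendsto_log_half_atTop : Tendsto (fun z : ℝ => log (z / 2)) atTop atTop :=
  tendsto_log_atTop.comp (tendsto_id.atTop_div_const two_pos)

theorem tendsto_K0_nhdsGT_zero : Tendsto K0 (𝓝[>] 0) atTop := by
  refine (tendsto_K0_add_log_half_nhdsGT_zero.add_atTop (tendsto_atTop_add_const_right _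
    (-eulerMascheroniConstant) (tendsto_neg_atBot_atTop.comp tendsto_log_half_nhdsGT_zero))).congr
    fun z => ?_
  dsimp only [Function.comp_apply]
  ring

theorem hasDerivAt_log_half {z : ℝ} (hz : z ≠ 0) :
    HasDerivAt (fun z : ℝ => log (z / 2)) (1 / z) z :=
  (((hasDerivAt_id z).div_const 2).log (div_ne_zero hz two_ne_zero)).congr_deriv
    (div_div_div_cancel_right₀ two_ne_zero 1 z)

section StrictMonoOn

variable {ι X Y : Type*} [LinearOrder X] [Preorder Y] {F : X → Y} {a : X} {l : Filter ι}
  {y : ι → X}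

theorem tendsto_atTop_of_strictMonoOn_Ioi [NoMaxOrder X] (hF : StrictMonoOn F (Ioi a))
    (hy : ∀ᶠ x in l, a < y x) (hFy : Tendsto (fun x => F (y x)) l atTop) :
    Tendsto y l atTop := by
  obtain ⟨b, hb⟩ := exists_gt a
  refine tendsto_atTop.2 fun M => ?_
  have hM : a < max M b := hb.trans_le (le_max_right M b)
  filter_upwards [hy, hFy.eventually_ge_atTop (F (max M b))] with x hx hle
  exact (le_max_left M b).trans ((hF.le_iff_le hM hx).1 hle)

theorem tendsto_nhdsGT_of_strictMonoOn_Ioi [TopologicalSpace X] [OrderTopology X]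
    (hF : StrictMonoOn F (Ioi a)) (hy : ∀ᶠ x in l, a < y x)
    (hFy : ∀ ε, a < ε → ∀ᶠ x in l, F (y x) < F ε) : Tendsto y l (𝓝[>] a) := by
  refine tendsto_nhdsWithin_iff.2 ⟨tendsto_order.2 ⟨fun b hb => ?_, fun ε hε => ?_⟩, hy⟩
  · exact hy.mono fun x hx => hb.trans hx
  · filter_upwards [hy, hFy ε hε] with x hx hlt using (hF.lt_iff_lt hx hε).1 hlt

end StrictMonoOn

/-- The function `log (z / 2) + γ + σ K₀(z)` of the scaled variable `z = s L`, through which the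
eigenvalue equations are solved: `σ = -1` belongs to `f` and `σ = 1` to `g`. -/
def logAddK0 (σ z : ℝ) : ℝ := log (z / 2) + eulerMascheroniConstant + σ * K0 z

section LogAddK0

variable {σ z : ℝ}

theorem hasDerivAt_logAddK0 (σ : ℝ) (hz : 0 < z) :
    HasDerivAt (logAddK0 σ) (1 / z - σ * K1 z) z :=
  (((hasDerivAt_log_half hz.ne').add_const _).add ((hasDerivAt_K0 hz).const_mul σ)).congr_deriv
    (by ring)

theorem continuousOn_logAddK0 (σ : ℝ) : ContinuousOn (logAddK0 σ) (Ioi 0) := fun _ hz =>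
  (hasDerivAt_logAddK0 σ hz).continuousAt.continuousWithinAt

theorem one_div_sub_mul_K1_pos (hσ : σ ≤ 1) (hz : 0 < z) : 0 < 1 / z - σ * K1 z :=
  sub_pos.2 ((mul_le_of_le_one_left (K1_pos hz).le hσ).trans_lt (K1_lt_one_div hz))

theorem strictMonoOn_logAddK0 (hσ : σ ≤ 1) : StrictMonoOn (logAddK0 σ) (Ioi 0) := by
  refine strictMonoOn_of_deriv_pos (convex_Ioi 0) (continuousOn_logAddK0 σ) fun z hz => ?_
  rw [interior_Ioi] at hz
  rw [(hasDerivAt_logAddK0 σ hz).deriv]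
  exact one_div_sub_mul_K1_pos hσ hz

theorem tendsto_logAddK0_atTop (σ : ℝ) : Tendsto (logAddK0 σ) atTop atTop :=
  (tendsto_atTop_add_const_right _ _ tendsto_log_half_atTop).atTop_add
    (tendsto_K0_atTop.const_mul σ)

theorem tendsto_logAddK0_one_nhdsGT_zero : Tendsto (logAddK0 1) (𝓝[>] 0) (𝓝 0) :=
  tendsto_K0_add_log_half_nhdsGT_zero.congr fun z => by rw [logAddK0, one_mul]

theorem tendsto_logAddK0_nhdsGT_zero (hσ : σ < 1) : Tendsto (logAddK0 σ) (𝓝[>] 0) atBot := by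
  refine (tendsto_logAddK0_one_nhdsGT_zero.add_atBot
    (tendsto_K0_nhdsGT_zero.const_mul_atTop_of_neg (sub_neg.2 hσ))).congr fun z => ?_
  dsimp only [logAddK0]
  ring

theorem logAddK0_one_pos (hz : 0 < z) : 0 < logAddK0 1 z := by
  have hmono := strictMonoOn_logAddK0 le_rfl
  have hhalf : 0 ≤ logAddK0 1 (z / 2) := by
    refine le_of_tendsto tendsto_logAddK0_one_nhdsGT_zero ?_
    filter_upwards [Ioo_mem_nhdsGT (half_pos hz)] with w hw
    exact (hmono hw.1 (half_pos hz) hw.2).le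
  exact hhalf.trans_lt (hmono (half_pos hz) hz (half_lt_self hz))

theorem surjOn_logAddK0_one : SurjOn (logAddK0 1) (Ioi 0) (Ioi 0) :=
  isPreconnected_Ioi.intermediate_value_Ioi (le_principal_iff.2 self_mem_nhdsWithin)
    (le_principal_iff.2 (Ioi_mem_atTop 0)) (continuousOn_logAddK0 1)
    tendsto_logAddK0_one_nhdsGT_zero (tendsto_logAddK0_atTop 1)

theorem surjOn_logAddK0 (hσ : σ < 1) : SurjOn (logAddK0 σ) (Ioi 0) univ :=
  isPreconnected_Ioi.intermediate_value_Iii (le_principal_iff.2 self_mem_nhdsWithin)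
    (le_principal_iff.2 (Ioi_mem_atTop 0)) (continuousOn_logAddK0 σ)
    (tendsto_logAddK0_nhdsGT_zero hσ) (tendsto_logAddK0_atTop σ)

end LogAddK0

/-- The common form of the eigenvalue functions `fα` (`σ = -1`) and `gα` (`σ = 1`); the sign is a
real parameter `σ`, so that both are handled at once. -/
def eigenvalueFun (σ α s L : ℝ) : ℝ :=
  2 * π * α + eulerMascheroniConstant + log (s / 2) + σ * K0 (s * L)

section EigenvalueFun

variable {σ α s L : ℝ}

theorem fα_eq_eigenvalueFun (α s L : ℝ) : fα α s L = eigenvalueFun (-1) α s L := by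
  rw [fα, eigenvalueFun, neg_one_mul, sub_eq_add_neg]

theorem gα_eq_eigenvalueFun (α s L : ℝ) : gα α s L = eigenvalueFun 1 α s L := by
  rw [gα, eigenvalueFun, one_mul]

theorem hasDerivAt_eigenvalueFun_left (σ α : ℝ) (hs : 0 < s) (hL : 0 < L) :
    HasDerivAt (fun t => eigenvalueFun σ α t L) (1 / s - σ * (L * K1 (s * L))) s := by
  have hK0 : HasDerivAt (fun t => K0 (t * L)) (-K1 (s * L) * (1 * L)) s :=
    HasDerivAt.comp s (h := (· * L)) (hasDerivAt_K0 (mul_pos hs hL)) ((hasDerivAt_id s).mul_const L)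
  exact (((hasDerivAt_log_half hs.ne').const_add _).add (hK0.const_mul σ)).congr_deriv (by ring)

theorem hasDerivAt_eigenvalueFun_right (σ α : ℝ) (hs : 0 < s) (hL : 0 < L) :
    HasDerivAt (fun Λ => eigenvalueFun σ α s Λ) (-(σ * (s * K1 (s * L)))) L := by
  have hK0 : HasDerivAt (fun Λ => K0 (s * Λ)) (-K1 (s * L) * (s * 1)) L :=
    HasDerivAt.comp L (h := (s * ·)) (hasDerivAt_K0 (mul_pos hs hL)) ((hasDerivAt_id L).const_mul s)
  exact ((hK0.const_mul σ).const_add _).congr_deriv (by ring)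

theorem one_div_sub_mul_mul_K1_pos (hσ : σ ≤ 1) (hs : 0 < s) (hL : 0 < L) :
    0 < 1 / s - σ * (L * K1 (s * L)) := by
  have hscale : 1 / s - σ * (L * K1 (s * L)) = L * (1 / (s * L) - σ * K1 (s * L)) := by
    field_simp
  rw [hscale]
  exact mul_pos hL (one_div_sub_mul_K1_pos hσ (mul_pos hs hL))

theorem eigenvalueFun_eq_zero_iff (hs : 0 < s) (hL : 0 < L) :
    eigenvalueFun σ α s L = 0 ↔ logAddK0 σ (s * L) = log L - 2 * π * α := by
  have hlog : log (s * L / 2) = log (s / 2) + log L := by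
    rw [mul_div_right_comm, log_mul (half_pos hs).ne' hL.ne']
  rw [eigenvalueFun, logAddK0, hlog, ← sub_eq_zero (b := log L - _)]
  ring_nf

theorem eq_two_mul_exp_of_eigenvalueFun_eq_zero (hs : 0 < s) (h : eigenvalueFun σ α s L = 0) :
    s = 2 * exp (-2 * π * α - eulerMascheroniConstant - σ * K0 (s * L)) := by
  have hlog : -2 * π * α - eulerMascheroniConstant - σ * K0 (s * L) = log (s / 2) := by
    rw [eigenvalueFun] at h
    linarith
  rw [hlog, exp_log (half_pos hs), mul_div_cancel₀ s two_ne_zero]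

theorem existsUnique_eigenvalueFun_eq_zero (hσ : σ ≤ 1) (hL : 0 < L)
    (hc : log L - 2 * π * α ∈ logAddK0 σ '' Ioi 0) :
    ∃! s, 0 < s ∧ eigenvalueFun σ α s L = 0 := by
  obtain ⟨z, hz, hzc⟩ := hc
  have hzL : 0 < z / L := div_pos hz hL
  refine ⟨z / L, ⟨hzL, ?_⟩, fun s ⟨hs, hsc⟩ => ?_⟩
  · rwa [eigenvalueFun_eq_zero_iff hzL hL, div_mul_cancel₀ z hL.ne']
  · rw [eigenvalueFun_eq_zero_iff hs hL, ← hzc] at hsc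
    exact eq_div_of_mul_eq hL.ne' ((strictMonoOn_logAddK0 hσ).injOn (mul_pos hs hL) hz hsc)

theorem log_sub_pos_of_eigenvalueFun_one_eq_zero (hs : 0 < s) (hL : 0 < L)
    (h : eigenvalueFun 1 α s L = 0) : 0 < log L - 2 * π * α :=
  (eigenvalueFun_eq_zero_iff hs hL).1 h ▸ logAddK0_one_pos (mul_pos hs hL)

end EigenvalueFun

section Asymptotics

variable {σ α : ℝ} {s : ℝ → ℝ}

theorem tendsto_root_eigenvalueFun_atTop (hσ : σ ≤ 1)
    (hs : ∀ᶠ L in atTop, 0 < s L ∧ eigenvalueFun σ α (s L) L = 0) :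
    Tendsto s atTop (𝓝 (2 * exp (-2 * π * α - eulerMascheroniConstant))) := by
  have hsL : Tendsto (fun L => s L * L) atTop atTop := by
    refine tendsto_atTop_of_strictMonoOn_Ioi (strictMonoOn_logAddK0 hσ) ?_ ?_
    · filter_upwards [hs, eventually_gt_atTop 0] with L hs hL using mul_pos hs.1 hL
    · refine (tendsto_atTop_add_const_right _ (-(2 * π * α)) tendsto_log_atTop).congr' ?_
      filter_upwards [hs, eventually_gt_atTop 0] with L hs hL
      rw [(eigenvalueFun_eq_zero_iff hs.1 hL).1 hs.2, sub_eq_add_neg]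
  have hlim := (((tendsto_K0_atTop.comp hsL).const_mul σ).const_sub
    (-2 * π * α - eulerMascheroniConstant)).rexp.const_mul 2
  rw [mul_zero, sub_zero] at hlim
  exact hlim.congr' (hs.mono fun L hs =>
    (eq_two_mul_exp_of_eigenvalueFun_eq_zero hs.1 hs.2).symm)

theorem tendsto_root_mul_nhdsGT_zero {l : Filter ℝ} (hσ : σ ≤ 1)
    (hl : ∀ᶠ L in l, 0 < L) (hs : ∀ᶠ L in l, 0 < s L ∧ eigenvalueFun σ α (s L) L = 0)
    (hlog : ∀ ε, 0 < ε → ∀ᶠ L in l, log L - 2 * π * α < logAddK0 σ ε) :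
    Tendsto (fun L => s L * L) l (𝓝[>] 0) := by
  refine tendsto_nhdsGT_of_strictMonoOn_Ioi (strictMonoOn_logAddK0 hσ) ?_ fun ε hε => ?_
  · filter_upwards [hl, hs] with L hL hs using mul_pos hs.1 hL
  · filter_upwards [hl, hs, hlog ε hε] with L hL hs hlt
    rwa [(eigenvalueFun_eq_zero_iff hs.1 hL).1 hs.2]

theorem tendsto_root_eigenvalueFun_nhdsGT_zero (hσ : σ < 0)
    (hs : ∀ᶠ L in 𝓝[>] 0, 0 < s L ∧ eigenvalueFun σ α (s L) L = 0) :
    Tendsto s (𝓝[>] 0) atTop := by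
  have hsL : Tendsto (fun L => s L * L) (𝓝[>] 0) (𝓝[>] 0) := by
    refine tendsto_root_mul_nhdsGT_zero (by linarith) self_mem_nhdsWithin hs
      fun ε _ => ?_
    filter_upwards [tendsto_log_nhdsGT_zero.eventually_lt_atBot (logAddK0 σ ε + 2 * π * α)]
      with L hL using sub_right_lt_of_lt_add hL
  have hlim := (tendsto_exp_atTop.comp (tendsto_atTop_add_const_left _
    (-2 * π * α - eulerMascheroniConstant) ((tendsto_K0_nhdsGT_zero.comp hsL).const_mul_atTop
    (neg_pos.2 hσ)))).const_mul_atTop two_pos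
  refine hlim.congr' (hs.mono fun L hs => ?_)
  conv_rhs => rw [eq_two_mul_exp_of_eigenvalueFun_eq_zero hs.1 hs.2, sub_eq_add_neg, ← neg_mul]
  rfl

theorem tendsto_root_eigenvalueFun_nhdsGT_exp
    (hs : ∀ᶠ L in 𝓝[>] exp (2 * π * α), 0 < s L ∧ eigenvalueFun 1 α (s L) L = 0) :
    Tendsto s (𝓝[>] exp (2 * π * α)) (𝓝 0) := by
  have hpos : ∀ᶠ L in 𝓝[>] exp (2 * π * α), 0 < L :=
    eventually_nhdsWithin_of_forall fun L hL => (exp_pos _).trans hL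
  have hlog : Tendsto (fun L => log L - 2 * π * α) (𝓝[>] exp (2 * π * α)) (𝓝 0) := by
    have hcont := (continuousAt_log (exp_pos (2 * π * α)).ne').tendsto.sub_const (2 * π * α)
    rw [log_exp, sub_self] at hcont
    exact hcont.mono_left nhdsWithin_le_nhds
  have hsL := tendsto_root_mul_nhdsGT_zero le_rfl hpos hs
    fun ε hε => hlog.eventually_lt_const (logAddK0_one_pos hε)
  have hlim := (tendsto_nhds_of_tendsto_nhdsWithin hsL).div
    (tendsto_nhds_of_tendsto_nhdsWithin tendsto_id) (exp_pos (2 * π * α)).ne'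
  rw [zero_div] at hlim
  exact hlim.congr' (hpos.mono fun L hL => mul_div_cancel_right₀ (s L) hL.ne')

end Asymptotics

/-- two point interactions in 2D: eigenvalue equations. -/
theorem two_delta_eigenvalue_equations_dim2 (α : ℝ) :
    (∀ s L : ℝ, 0 < s → 0 < L →
      HasDerivAt (fun σ => fα α σ L) (1 / s + L * K1 (s * L)) s ∧
      0 < 1 / s + L * K1 (s * L) ∧
      HasDerivAt (fun Λ => fα α s Λ) (s * K1 (s * L)) L ∧
      0 < s * K1 (s * L)) ∧
    (∀ s L : ℝ, 0 < s → 0 < L →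
      HasDerivAt (fun σ => gα α σ L) (1 / s - L * K1 (s * L)) s ∧
      0 < 1 / s - L * K1 (s * L) ∧
      HasDerivAt (fun Λ => gα α s Λ) (-(s * K1 (s * L))) L ∧
      -(s * K1 (s * L)) < 0) ∧
    (∀ L : ℝ, 0 < L → ∃! s : ℝ, 0 < s ∧ fα α s L = 0) ∧
    (∀ s₁ : ℝ → ℝ, (∀ L : ℝ, 0 < L → 0 < s₁ L ∧ fα α (s₁ L) L = 0) →
      Tendsto s₁ (nhdsWithin 0 (Ioi 0)) atTop ∧
      Tendsto s₁ atTop (nhds (2 * Real.exp (-2 * π * α - eulerMascheroniConstant)))) ∧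
    (∀ L : ℝ, 0 < L → L ≤ Real.exp (2 * π * α) →
      ¬ ∃ s : ℝ, 0 < s ∧ gα α s L = 0) ∧
    (∀ L : ℝ, Real.exp (2 * π * α) < L → ∃! s : ℝ, 0 < s ∧ gα α s L = 0) ∧
    (∀ s₂ : ℝ → ℝ,
      (∀ L : ℝ, Real.exp (2 * π * α) < L → 0 < s₂ L ∧ gα α (s₂ L) L = 0) →
      Tendsto s₂ (nhdsWithin (Real.exp (2 * π * α)) (Ioi (Real.exp (2 * π * α)))) (nhds 0) ∧
      Tendsto s₂ atTop (nhds (2 * Real.exp (-2 * π * α - eulerMascheroniConstant)))) := by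
  simp only [fα_eq_eigenvalueFun, gα_eq_eigenvalueFun]
  refine ⟨fun s L hs hL => ?_, fun s L hs hL => ?_, fun L hL => ?_, fun s₁ hs₁ => ⟨?_, ?_⟩,
    fun L hL hle => ?_, fun L hlt => ?_, fun s₂ hs₂ => ⟨?_, ?_⟩⟩
  · have hK1 := K1_pos (mul_pos hs hL)
    exact ⟨by simpa using hasDerivAt_eigenvalueFun_left (-1) α hs hL, by positivity,
      by simpa using hasDerivAt_eigenvalueFun_right (-1) α hs hL, by positivity⟩
  · have hK1 := K1_pos (mul_pos hs hL)
    exact ⟨by simpa using hasDerivAt_eigenvalueFun_left 1 α hs hL,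
      by simpa using one_div_sub_mul_mul_K1_pos le_rfl hs hL,
      by simpa using hasDerivAt_eigenvalueFun_right 1 α hs hL, neg_neg_of_pos (mul_pos hs hK1)⟩
  · exact existsUnique_eigenvalueFun_eq_zero (by norm_num) hL
      (surjOn_logAddK0 (by norm_num) (mem_univ _))
  · exact tendsto_root_eigenvalueFun_nhdsGT_zero (by norm_num)
      (eventually_nhdsWithin_of_forall hs₁)
  · exact tendsto_root_eigenvalueFun_atTop (by norm_num) ((eventually_gt_atTop 0).mono hs₁)
  · rintro ⟨s, hs, hzero⟩
    exact ((log_le_iff_le_exp hL).2 hle).not_gt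
      (sub_pos.1 (log_sub_pos_of_eigenvalueFun_one_eq_zero hs hL hzero))
  · have hL : 0 < L := (exp_pos _).trans hlt
    exact existsUnique_eigenvalueFun_eq_zero le_rfl hL
      (surjOn_logAddK0_one (sub_pos.2 ((lt_log_iff_exp_lt hL).2 hlt)))
  · exact tendsto_root_eigenvalueFun_nhdsGT_exp (eventually_nhdsWithin_of_forall hs₂)
  · exact tendsto_root_eigenvalueFun_atTop le_rfl ((eventually_gt_atTop _).mono hs₂)

end
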